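/- arXiv:1806.02536 — 5 statements merged into one kernel-verified Lean document; each statement's English description precedes it below -/
import Mathlib

section
/- Let k ∈ {3, 4, 6} with ε = 1, 2, 3 respectively, and let a, b be integers with a ≠ 0. Then the integer d = gcd(a², a(2b − ε), Φ_k(b − 1)) divides a. -/
open Polynomial

/-!
Write `c = Φ_k(b - 1) = b² - εb + ε` and `m = 2b - ε`, so that `m² - 4c = ε² - 4ε` is
`-3, -4, -3`. Since `d` divides `a * m` and `c`, it divides `p * a` with `p = 3` for `k = 3, 6`;
for `k = 4`, where `m = 2(b - 1)` and `c = (b - 1)² + 1`, the factor `2` can be spared and `p = 2`.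
In each case `p² ∤ c` by a computation modulo `p²`, so `p² ∤ d`, and together with `d ∣ a²`
this upgrades `d ∣ p * a` to `d ∣ a`.
-/

lemma dvd_of_dvd_prime_mul {p a d : ℤ} (hp : Prime p) (h1 : d ∣ p * a) (h2 : d ∣ a ^ 2)
    (h3 : ¬ p * p ∣ d) : d ∣ a := by
  by_cases hpd : p ∣ d
  · obtain ⟨e, rfl⟩ := hpd
    have hpe : ¬ p ∣ e := fun h => h3 (mul_dvd_mul_left p h)
    have hea : e ∣ a := (mul_dvd_mul_iff_left hp.ne_zero).1 h1
    have hpa : p ∣ a := hp.dvd_of_dvd_pow ((dvd_mul_right p e).trans h2)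
    exact ((hp.coprime_iff_not_dvd).2 hpe).mul_dvd hpa hea
  · exact (((hp.coprime_iff_not_dvd).2 hpd).symm).dvd_of_dvd_mul_left h1

lemma eval_cyclotomic_four (x : ℤ) : (cyclotomic 4 ℤ).eval x = x ^ 2 + 1 := by
  have h := cyclotomic_prime_pow_eq_geom_sum (R := ℤ) (n := 1) Nat.prime_two
  norm_num [Finset.sum_range_succ] at h
  rw [h]; simp; ring

/-- For `k ∈ {3, 4, 6}` with `ε = 1, 2, 3` respectively and integers `a ≠ 0`, `b`,
the integer `d = gcd(a², a(2b − ε), Φ_k(b − 1))` divides `a`. -/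
theorem stmt_4 (k : ℕ) (ε a b d : ℤ)
    (hkε : (k = 3 ∧ ε = 1) ∨ (k = 4 ∧ ε = 2) ∨ (k = 6 ∧ ε = 3))
    (ha : a ≠ 0)
    (hd : d = (Int.gcd (a ^ 2)
      ((Int.gcd (a * (2 * b - ε)) ((cyclotomic k ℤ).eval (b - 1)) : ℕ) : ℤ) : ℤ)) :
    d ∣ a := by
  have h2 : d ∣ a ^ 2 := hd ▸ Int.gcd_dvd_left _ _
  have h0 := hd ▸ Int.gcd_dvd_right (a ^ 2)
    ((Int.gcd (a * (2 * b - ε)) ((cyclotomic k ℤ).eval (b - 1)) : ℕ) : ℤ)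
  have hm : d ∣ a * (2 * b - ε) := h0.trans (Int.gcd_dvd_left _ _)
  have hc : d ∣ (cyclotomic k ℤ).eval (b - 1) := h0.trans (Int.gcd_dvd_right _ _)
  clear hd h0
  rcases hkε with ⟨rfl, rfl⟩ | ⟨rfl, rfl⟩ | ⟨rfl, rfl⟩
  · have e : (cyclotomic 3 ℤ).eval (b - 1) = b ^ 2 - b + 1 := by
      simp [cyclotomic_three]; ring
    rw [e] at hc
    refine dvd_of_dvd_prime_mul Int.prime_three ?_ h2 fun h => ?_
    · have key : 3 * a = 4 * a * (b ^ 2 - b + 1) - a * (2 * b - 1) * (2 * b - 1) := by ring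
      rw [key]
      exact dvd_sub (hc.mul_left (4 * a)) (hm.mul_right (2 * b - 1))
    · have h9 := Int.emod_eq_zero_of_dvd (h.trans hc)
      have : b % 9 = 0 ∨ b % 9 = 1 ∨ b % 9 = 2 ∨ b % 9 = 3 ∨ b % 9 = 4 ∨ b % 9 = 5 ∨ b % 9 = 6 ∨
        b % 9 = 7 ∨ b % 9 = 8 := by omega
      rcases this with h | h | h | h | h | h | h | h | h <;>
        simp [pow_two, Int.add_emod, Int.sub_emod, Int.mul_emod, h] at h9
  · rw [eval_cyclotomic_four] at hc
    refine dvd_of_dvd_prime_mul Int.prime_two ?_ h2 fun h => ?_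
    · have key : 2 * a = 2 * a * ((b - 1) ^ 2 + 1) - a * (2 * b - 2) * (b - 1) := by ring
      rw [key]
      exact dvd_sub (hc.mul_left (2 * a)) (hm.mul_right (b - 1))
    · have h4 := Int.emod_eq_zero_of_dvd (h.trans hc)
      have : b % 4 = 0 ∨ b % 4 = 1 ∨ b % 4 = 2 ∨ b % 4 = 3 := by omega
      rcases this with h | h | h | h <;>
        simp [pow_two, Int.add_emod, Int.sub_emod, Int.mul_emod, h] at h4
  · have e : (cyclotomic 6 ℤ).eval (b - 1) = b ^ 2 - 3 * b + 3 := by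
      simp [cyclotomic_six]; ring
    rw [e] at hc
    refine dvd_of_dvd_prime_mul Int.prime_three ?_ h2 fun h => ?_
    · have key : 3 * a = 4 * a * (b ^ 2 - 3 * b + 3) - a * (2 * b - 3) * (2 * b - 3) := by ring
      rw [key]
      exact dvd_sub (hc.mul_left (4 * a)) (hm.mul_right (2 * b - 3))
    · have h9 := Int.emod_eq_zero_of_dvd (h.trans hc)
      have : b % 9 = 0 ∨ b % 9 = 1 ∨ b % 9 = 2 ∨ b % 9 = 3 ∨ b % 9 = 4 ∨ b % 9 = 5 ∨ b % 9 = 6 ∨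
        b % 9 = 7 ∨ b % 9 = 8 := by omega
      rcases this with h | h | h | h | h | h | h | h | h <;>
        simp [pow_two, Int.add_emod, Int.sub_emod, Int.mul_emod, h] at h9
end

section
/- Let k ∈ {3, 4, 6}, let t(x) = ax + b with a, b integers, a ≠ 0, let d be a positive integer and r(x) ∈ ℤ[x] a quadratic polynomial with positive leading coefficient such that Φ_k(t(x) − 1) = d · r(x), let h be a positive integer and let q(x) = h · r(x) + t(x) − 1. If the Hasse bound 4q(x) ≥ t(x)² holds for infinitely many integers x, then 4h ≥ d. -/
/-!
With `s = t(x) - 1`, each of the three cyclotomic polynomials has value `s² + c s + 1` with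
`c ∈ {1, 0, -1}`. Multiplying the Hasse bound by `d` turns it into
`d (s - 1)² ≤ 4 h (s² + c s + 1)`. If `4 h ≤ d - 1`, comparing leading coefficients gives
`s² ≤ 3 d |s|`, so `s`, and hence `x` (as `a ≠ 0`), is bounded: only finitely many `x` satisfy
the Hasse bound.
-/

open Polynomial

/-- For `k ∈ {3, 4, 6}`, `Φ_k(s) = s² + c s + 1` with `c ∈ {1, 0, -1}`; only `|c| ≤ 1` matters. -/
lemma cyclotomic_eval_quadratic (k : ℕ) (hk : k ∈ ({3, 4, 6} : Set ℕ)) :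
    ∃ c : ℤ, -1 ≤ c ∧ c ≤ 1 ∧ ∀ s : ℤ, (cyclotomic k ℤ).eval s = s ^ 2 + c * s + 1 := by
  rcases hk with rfl | rfl | rfl
  · exact ⟨1, by norm_num, by norm_num, fun s => by simp [cyclotomic_three]⟩
  · refine ⟨0, by norm_num, by norm_num, fun s => ?_⟩
    have h4 : cyclotomic (2 ^ (1 + 1)) ℤ = _ := cyclotomic_prime_pow_eq_geom_sum Nat.prime_two
    norm_num [Finset.sum_range_succ] at h4
    rw [h4]
    simp
    ring
  · exact ⟨-1, by norm_num, by norm_num, fun s => by simp [cyclotomic_six]; ring⟩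

/-- The Hasse bound, in terms of `s = t - 1` and `R = r(x)`, bounds `s` when `4 h < d`. -/
lemma abs_le_of_hasse {c d h s R : ℤ} (hc1 : -1 ≤ c) (hc2 : c ≤ 1) (hd : 0 < d)
    (hlt : 4 * h < d) (hR : s ^ 2 + c * s + 1 = d * R)
    (hb : (s + 1) ^ 2 ≤ 4 * (h * R + s)) : |s| ≤ 3 * d := by
  have h1 : d * (s - 1) ^ 2 ≤ 4 * h * (s ^ 2 + c * s + 1) := by
    rw [hR]
    nlinarith
  have hpos : 0 ≤ s ^ 2 + c * s + 1 := by nlinarith [sq_nonneg (2 * s + c)]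
  have h2 : 4 * h * (s ^ 2 + c * s + 1) ≤ (d - 1) * (s ^ 2 + c * s + 1) :=
    mul_le_mul_of_nonneg_right (by omega) hpos
  have h3 : s ^ 2 ≤ (2 * d + (d - 1) * c) * s := by nlinarith
  have hm : |2 * d + (d - 1) * c| ≤ 3 * d := by
    rw [abs_le]
    constructor <;> nlinarith
  have h4 : |s| * |s| ≤ 3 * d * |s| := by
    calc |s| * |s| = s ^ 2 := by rw [← sq, sq_abs]
      _ ≤ |(2 * d + (d - 1) * c) * s| := h3.trans (le_abs_self _)
      _ = |2 * d + (d - 1) * c| * |s| := abs_mul _ _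
      _ ≤ 3 * d * |s| := mul_le_mul_of_nonneg_right hm (abs_nonneg s)
  by_contra! hcon
  nlinarith



/-- Let `k ∈ {3, 4, 6}`, `t(x) = ax + b` with `a ≠ 0`, `d > 0` and `r(x) ∈ ℤ[x]` a quadratic
polynomial with positive leading coefficient such that `Φ_k(t(x) − 1) = d·r(x)`, `h > 0` and
`q(x) = h·r(x) + t(x) − 1`. If the Hasse bound `4q(x) ≥ t(x)²` holds for infinitely many
integers `x`, then `4h ≥ d`. -/
theorem stmt_5 (k : ℕ) (hk : k ∈ ({3, 4, 6} : Set ℕ)) (a b d h : ℤ) (ha : a ≠ 0)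
    (hd : 0 < d) (hh : 0 < h) (r : Polynomial ℤ)
    (hrdeg : r.degree = 2) (hrlead : 0 < r.leadingCoeff)
    (hreq : (cyclotomic k ℤ).comp (C a * X + C b - 1) = C d * r)
    (hhasse : {x : ℤ |
        ((C a * X + C b : Polynomial ℤ).eval x) ^ 2 ≤
          4 * ((C h * r + (C a * X + C b) - 1).eval x)}.Infinite) :
    4 * h ≥ d := by
  by_contra! hlt
  obtain ⟨c, hc1, hc2, hc⟩ := cyclotomic_eval_quadratic k hk
  refine hhasse ((Set.finite_Icc (-(3 * d + |b - 1|)) (3 * d + |b - 1|)).subset fun x hx => ?_)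
  have hR := congrArg (eval x) hreq
  simp only [eval_comp, hc, eval_sub, eval_add, eval_mul, eval_C, eval_X, eval_one] at hR
  simp only [Set.mem_setOf_eq, eval_sub, eval_add, eval_mul, eval_C, eval_X, eval_one] at hx
  have hs := abs_le_of_hasse hc1 hc2 hd hlt hR (by
    convert hx using 2 <;> ring)
  have hax : |x| ≤ |a * x| := by
    rw [abs_mul]
    exact le_mul_of_one_le_left (abs_nonneg x) (Int.one_le_abs ha)
  have htri : |a * x| ≤ |a * x + b - 1| + |b - 1| := by
    calc |a * x| = |(a * x + b - 1) - (b - 1)| := by ring_nf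
      _ ≤ _ := abs_sub _ _
  exact abs_le.mp (by linarith)
end

section
/- Let k ∈ {3, 4, 6}, let t(x) = ax + b with a, b integers, a ≠ 0, and let d be the positive integer such that Φ_k(t(x) − 1) = d · r(x) with r(x) ∈ ℤ[x] a primitive irreducible quadratic. Then the pair (t(x), r(x)) can be deduced from a pair whose trace polynomial is t'(x) = dx + b' with 0 ≤ b' < d: there exist integers u ≠ 0 and v, and an integer b' with 0 ≤ b' < d and d dividing Φ_k(b' − 1), such that t(x) = t'(ux + v) and r(x) = r'(ux + v), where t'(x) = dx + b' and r'(x) = Φ_k(t'(x) − 1)/d ∈ ℤ[x]. -/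
open Polynomial

/-!
Write `Φ_k(y) = y² + c y + 1` with `c ∈ {1, 0, -1}` and `B = b - 1`. Comparing coefficients in
`Φ_k(ax + B) = d r(x)` shows that `d` divides `a²`, `a(2B + c)` and `N = B² + cB + 1`. The key
point, `dvd_of_dvd_coeffs`, is that this already forces `d ∣ a`. Indeed the cofactor
`e = d / gcd(d, a)` is coprime to `a / gcd(d, a)`, so it divides both `2B + c` and `gcd(d, a)`;
hence `e²` divides `d`, therefore `N`, and by `4N = (2B + c)² + (4 - c²)` it divides
`4 - c² ∈ {3, 4}`. Thus `e = ±1`, unless `c = 0` and `e = ±2`, and then `4 ∣ B² + 1`, which is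
impossible.

Once `d ∣ a`, Euclidean division `b = d v + b'` and `u = a / d` give `ax + b = d(ux + v) + b'`.
The polynomial `r'` exists because `d ∣ Φ_k(b' - 1)`, and `r = r'(ux + v)` follows on cancelling `d`.
-/

/-- The three cyclotomic polynomials of degree two in a uniform shape. -/
lemma cyclotomic_eq_quadratic {k : ℕ} (hk : k ∈ ({3, 4, 6} : Set ℕ)) :
    ∃ c : ℤ, (c = 1 ∨ c = 0 ∨ c = -1) ∧ cyclotomic k ℤ = X ^ 2 + C c * X + 1 := by
  rcases hk with rfl | rfl | rfl
  · exact ⟨1, by simp, by simp [cyclotomic_three]⟩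
  · refine ⟨0, by simp, ?_⟩
    have h := cyclotomic_prime_pow_eq_geom_sum (R := ℤ) (n := 1) Nat.prime_two
    norm_num [Finset.sum_range_succ] at h
    rw [h]
    simp [add_comm]
  · refine ⟨-1, by simp, ?_⟩
    simp [cyclotomic_six, sub_eq_add_neg]

/-- A common divisor of the coefficients of `Φ(ax + B)`, where `Φ(y) = y² + cy + 1`,
divides `a`. -/
lemma dvd_of_dvd_coeffs {a B c d : ℤ} (hc : c = 1 ∨ c = 0 ∨ c = -1) (hd : 0 < d)
    (h2 : d ∣ a ^ 2) (h1 : d ∣ a * (2 * B + c)) (h0 : d ∣ B ^ 2 + c * B + 1) : d ∣ a := by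
  obtain ⟨g, e, s, hg, hcop, rfl, rfl⟩ : ∃ g e s : ℤ, g ≠ 0 ∧ IsCoprime e s ∧
      d = e * g ∧ a = s * g := by
    have hpos : 0 < Int.gcd d a := Int.gcd_pos_of_ne_zero_left _ hd.ne'
    obtain ⟨e, s, hes, hd', ha'⟩ := Int.exists_gcd_one hpos
    exact ⟨Int.gcd d a, e, s, by exact_mod_cast hpos.ne', Int.isCoprime_iff_gcd_eq_one.2 hes,
      hd', ha'⟩
  have hes : e ∣ 2 * B + c := by
    refine hcop.dvd_of_dvd_mul_left ?_
    refine Int.dvd_of_mul_dvd_mul_right hg (?_ : e * g ∣ s * (2 * B + c) * g)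
    convert h1 using 1
    ring
  have heg : e ∣ g := by
    have : e ∣ s ^ 2 * g := by
      refine Int.dvd_of_mul_dvd_mul_right hg (?_ : e * g ∣ s ^ 2 * g * g)
      convert h2 using 1
      ring
    exact (hcop.pow_right).dvd_of_dvd_mul_left this
  have hee : e ^ 2 ∣ B ^ 2 + c * B + 1 := by
    rw [sq]
    exact (mul_dvd_mul_left e heg).trans h0
  -- Since `e²` divides both `N` and `(2B + c)²`, it divides the discriminant `4 - c²`.
  have hdisc : e ^ 2 ∣ 4 - c ^ 2 := by
    have h : e ^ 2 ∣ 4 * (B ^ 2 + c * B + 1) - (2 * B + c) ^ 2 :=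
      dvd_sub (hee.mul_left 4) (pow_dvd_pow_of_dvd hes 2)
    rwa [show 4 * (B ^ 2 + c * B + 1) - (2 * B + c) ^ 2 = 4 - c ^ 2 by ring] at h
  have hunit : IsUnit e := by
    have hle : e ^ 2 ≤ 4 := (Int.le_of_dvd (by rcases hc with rfl | rfl | rfl <;> norm_num)
      hdisc).trans (by nlinarith [sq_nonneg c])
    have hub : e ≤ 2 := by nlinarith
    have hlb : -2 ≤ e := by nlinarith
    -- `B² + 1` is never divisible by `4`, which excludes `e = ±2` when `c = 0`.
    have hsq : ¬ (4 : ℤ) ∣ B ^ 2 + 0 * B + 1 := by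
      intro h
      rcases Int.even_or_odd' B with ⟨m, rfl | rfl⟩ <;> ring_nf at h <;> omega
    rw [Int.isUnit_iff]
    rcases hc with rfl | rfl | rfl <;> interval_cases e <;> norm_num at * <;> tauto
  exact mul_dvd_mul_right (hunit.dvd) g

/-- Let `k ∈ {3, 4, 6}`, `t(x) = ax + b` with `a ≠ 0`, and `d > 0` with
`Φ_k(t(x) − 1) = d·r(x)` for a primitive irreducible quadratic `r(x) ∈ ℤ[x]`.
Then `(t(x), r(x))` can be deduced from a pair with trace polynomial `t'(x) = dx + b'`,
`0 ≤ b' < d`, `d ∣ Φ_k(b' − 1)` and `r'(x) = Φ_k(t'(x) − 1)/d ∈ ℤ[x]`: there are integers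
`u ≠ 0` and `v` with `t(x) = t'(ux + v)` and `r(x) = r'(ux + v)`. -/
theorem stmt_6 (k : ℕ) (hk : k ∈ ({3, 4, 6} : Set ℕ)) (a b d : ℤ) (ha : a ≠ 0) (hd : 0 < d)
    (r : Polynomial ℤ) (hprim : r.IsPrimitive) (hirr : Irreducible r) (hdeg : r.degree = 2)
    (hreq : (cyclotomic k ℤ).comp (C a * X + C b - 1) = C d * r) :
    ∃ (u v b' : ℤ) (r' : Polynomial ℤ), u ≠ 0 ∧ 0 ≤ b' ∧ b' < d ∧
      d ∣ (cyclotomic k ℤ).eval (b' - 1) ∧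
      C d * r' = (cyclotomic k ℤ).comp (C d * X + C b' - 1) ∧
      (C a * X + C b : Polynomial ℤ) = (C d * X + C b').comp (C u * X + C v) ∧
      r = r'.comp (C u * X + C v) := by
  obtain ⟨c, hc, hΦ⟩ := cyclotomic_eq_quadratic hk
  have hexp : (cyclotomic k ℤ).comp (C a * X + C b - 1) = C (a ^ 2) * X ^ 2 +
      C (a * (2 * (b - 1) + c)) * X + C ((b - 1) ^ 2 + c * (b - 1) + 1) := by
    rw [hΦ]
    simp
    ring
  have hcoeff : ∀ n, d ∣ (C (a ^ 2) * X ^ 2 + C (a * (2 * (b - 1) + c)) * X +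
      C ((b - 1) ^ 2 + c * (b - 1) + 1)).coeff n := by
    intro n
    rw [← hexp, hreq, coeff_C_mul]
    exact dvd_mul_right _ _
  have h0 : d ∣ (b - 1) ^ 2 + c * (b - 1) + 1 := by
    have h := hcoeff 0
    simpa only [coeff_add, coeff_C_mul, coeff_X_pow, coeff_X, coeff_C, OfNat.zero_ne_ofNat,
      one_ne_zero, if_true, if_false, mul_zero, zero_add] using h
  have h1 : d ∣ a * (2 * (b - 1) + c) := by
    have h := hcoeff 1
    simpa only [coeff_add, coeff_C_mul, coeff_X_pow, coeff_X, coeff_C, OfNat.one_ne_ofNat,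
      one_ne_zero, if_true, if_false, mul_zero, mul_one, zero_add, add_zero] using h
  have h2 : d ∣ a ^ 2 := by
    have h := hcoeff 2
    simpa only [coeff_add, coeff_C_mul, coeff_X_pow, coeff_X, coeff_C, OfNat.ofNat_ne_zero,
      OfNat.one_ne_ofNat, if_true, if_false, mul_zero, mul_one, add_zero] using h
  obtain ⟨u, rfl⟩ := dvd_of_dvd_coeffs hc hd h2 h1 h0
  have hb : d * (b / d) + b % d = b := Int.mul_ediv_add_emod b d
  have h0' : d ∣ (b % d - 1) ^ 2 + c * (b % d - 1) + 1 := by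
    have h : d ∣ (cyclotomic k ℤ).eval (b - 1) - (cyclotomic k ℤ).eval (b % d - 1) :=
      Dvd.dvd.trans ⟨b / d, by linarith⟩ (sub_dvd_eval_sub (b - 1) (b % d - 1) _)
    simp only [hΦ, eval_add, eval_mul, eval_pow, eval_X, eval_C, eval_one] at h
    exact (dvd_sub_right h0).1 h
  obtain ⟨n, hn⟩ := h0'
  have hr' : C d * (C d * X ^ 2 + C (2 * (b % d - 1) + c) * X + C n) =
      (cyclotomic k ℤ).comp (C d * X + C (b % d) - 1) := by
    have hn' := congrArg (C : ℤ → ℤ[X]) hn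
    rw [hΦ]
    simp at hn' ⊢
    linear_combination -hn'
  have ht : (C (d * u) * X + C b : ℤ[X]) =
      (C d * X + C (b % d)).comp (C u * X + C (b / d)) := by
    have hb' := congrArg (C : ℤ → ℤ[X]) hb
    simp only [C_add, C_mul, add_comp, mul_comp, C_comp, X_comp] at hb' ⊢
    linear_combination -hb'
  refine ⟨u, b / d, b % d, _, right_ne_zero_of_mul ha, Int.emod_nonneg b hd.ne',
    Int.emod_lt_of_pos b hd, ⟨n, ?_⟩, hr', ht, ?_⟩
  · rw [← hn, hΦ]
    simp
  · apply mul_left_cancel₀ (C_ne_zero.2 hd.ne')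
    rw [← hreq, ht]
    have h := congrArg (fun p : ℤ[X] => p.comp (C u * X + C (b / d))) hr'
    simp only [mul_comp, C_comp, comp_assoc, sub_comp, one_comp] at h ⊢
    exact h.symm
end

section
/- Let k ∈ {3, 4, 6} with ε = 1, 2, 3 respectively, let a, b be integers with a ≠ 0, let d and h be positive integers with Φ_k(ax + b − 1) = d·r(x) for a polynomial r(x) ∈ ℤ[x], and set t(x) = ax + b and q(x) = h·r(x) + t(x) − 1. Then for every x the identity d(4h − d)·(4q(x) − t(x)²) = (a(4h − d)x + a_k)² − f_k holds, where a_k = 2h(2b − ε) − (b − 2)d (equivalently a_k = b(4h − d) − 2(εh − d)) and f_k = −4h(4 − ε)(εh − d). Consequently, the complex multiplication equation D m² = 4q(x) − t(x)² transforms under the substitution y = a(4h − d)x + a_k into the generalized Pell equation y² − d(4h − d)D·m² = f_k. -/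
/-!
Write `s = 4h - d` and `t = ax + b`. For `k = 3, 4, 6` one has `Φ_k(t - 1) = t² - εt + ε`
(`cyclotomic_eval_sub_one`), so `d * r(x) = t² - εt + ε`. Multiplying `4q - t²` by `d` eliminates
`r` and leaves the quadratic `s t² - 4(εh - d) t + 4(εh - d)`; multiplying by `s` and completing
the square gives the identity. The Pell equation follows by substitution.
-/

open Polynomial

theorem cyclotomic_four_int : cyclotomic 4 ℤ = X ^ 2 + 1 := by
  have h := cyclotomic_prime_pow_eq_geom_sum (R := ℤ) (n := 1) Nat.prime_two
  norm_num [Finset.sum_range_succ] at h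
  rw [h]; ring

theorem cyclotomic_eval_sub_one (k : ℕ) (ε t : ℤ)
    (hkε : (k = 3 ∧ ε = 1) ∨ (k = 4 ∧ ε = 2) ∨ (k = 6 ∧ ε = 3)) :
    (cyclotomic k ℤ).eval (t - 1) = t ^ 2 - ε * t + ε := by
  rcases hkε with ⟨rfl, rfl⟩ | ⟨rfl, rfl⟩ | ⟨rfl, rfl⟩
  · simp [cyclotomic_three]; ring
  · simp [cyclotomic_four_int]; ring
  · simp [cyclotomic_six]; ring

/-- Let `k ∈ {3, 4, 6}` with `ε = 1, 2, 3` respectively, `t(x) = ax + b` (`a ≠ 0`), `d, h > 0`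
with `Φ_k(t(x) − 1) = d·r(x)`, and `q(x) = h·r(x) + t(x) − 1`. With
`a_k = 2h(2b − ε) − (b − 2)d = b(4h − d) − 2(εh − d)` and `f_k = −4h(4 − ε)(εh − d)`, the
identity `d(4h − d)(4q(x) − t(x)²) = (a(4h − d)x + a_k)² − f_k` holds for every `x`, and
hence the CM equation `Dm² = 4q(x) − t(x)²` transforms under `y = a(4h − d)x + a_k` into
the generalized Pell equation `y² − d(4h − d)D·m² = f_k`. -/
theorem stmt_12 (k : ℕ) (ε a b d h : ℤ)
    (hkε : (k = 3 ∧ ε = 1) ∨ (k = 4 ∧ ε = 2) ∨ (k = 6 ∧ ε = 3))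
    (ha : a ≠ 0) (hd : 0 < d) (hh : 0 < h) (r : Polynomial ℤ)
    (hreq : (cyclotomic k ℤ).comp (C a * X + C b - 1) = C d * r) :
    (2 * h * (2 * b - ε) - (b - 2) * d = b * (4 * h - d) - 2 * (ε * h - d)) ∧
    (∀ x : ℤ,
      d * (4 * h - d) *
          (4 * ((C h * r + (C a * X + C b) - 1).eval x) -
            ((C a * X + C b : Polynomial ℤ).eval x) ^ 2) =
        (a * (4 * h - d) * x + (2 * h * (2 * b - ε) - (b - 2) * d)) ^ 2 -
          (-(4 * h * (4 - ε) * (ε * h - d)))) ∧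
    (∀ D m x y : ℤ,
      y = a * (4 * h - d) * x + (2 * h * (2 * b - ε) - (b - 2) * d) →
      D * m ^ 2 =
          4 * ((C h * r + (C a * X + C b) - 1).eval x) -
            ((C a * X + C b : Polynomial ℤ).eval x) ^ 2 →
      y ^ 2 - d * (4 * h - d) * D * m ^ 2 = -(4 * h * (4 - ε) * (ε * h - d))) := by
  have key : ∀ x : ℤ,
      d * (4 * h - d) *
          (4 * ((C h * r + (C a * X + C b) - 1).eval x) -
            ((C a * X + C b : Polynomial ℤ).eval x) ^ 2) =
        (a * (4 * h - d) * x + (2 * h * (2 * b - ε) - (b - 2) * d)) ^ 2 -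
          (-(4 * h * (4 - ε) * (ε * h - d))) := by
    intro x
    have hr : (a * x + b) ^ 2 - ε * (a * x + b) + ε = d * r.eval x := by
      have e := congrArg (eval x) hreq
      simp only [eval_comp, eval_sub, eval_add, eval_mul, eval_C, eval_X, eval_one] at e
      rw [← e, cyclotomic_eval_sub_one k ε _ hkε]
    simp only [eval_sub, eval_add, eval_mul, eval_C, eval_X, eval_one]
    linear_combination (-(4 * h * (4 * h - d))) * hr
  refine ⟨by ring, key, ?_⟩
  intro D m x y hy hm
  rw [hy]
  linear_combination (-(d * (4 * h - d))) * hm - key x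
end

section
/- Let k be a positive integer, let q be a prime power, let t and h be integers, and let r be a prime with q + 1 − t = h·r and r not dividing k·q. Then the multiplicative order of q modulo r equals k (i.e., k is the smallest positive integer such that r divides q^k − 1) if and only if Φ_k(q) ≡ 0 (mod r), and this holds if and only if Φ_k(t − 1) ≡ 0 (mod r). -/
open Polynomial

/-!
Since `r ∤ k`, the roots of `Φ_k` in the field `ZMod r` are exactly the primitive `k`-th roots of
unity (`isRoot_cyclotomic_iff`), that is, the elements of multiplicative order `k`. Reducing `Φ_k`
modulo `r` turns both divisibility conditions into such root conditions, and `q` and `t - 1` have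
the same image in `ZMod r`.
-/

/-- Let `k > 0`, `q` a prime power, `r` a prime with `q + 1 − t = h·r` and `r ∤ kq`. Then the
multiplicative order of `q` modulo `r` equals `k` if and only if `Φ_k(q) ≡ 0 (mod r)`, and
this holds if and only if `Φ_k(t − 1) ≡ 0 (mod r)`. -/
theorem stmt_15 (k : ℕ) (hk : 0 < k) (q : ℕ) (hq : IsPrimePow q) (t h : ℤ) (r : ℕ)
    (hr : r.Prime) (hcard : (q : ℤ) + 1 - t = h * r)
    (hndvd : ¬ (r : ℤ) ∣ (k : ℤ) * (q : ℤ)) :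
    (orderOf (q : ZMod r) = k ↔ (r : ℤ) ∣ (cyclotomic k ℤ).eval (q : ℤ)) ∧
    ((r : ℤ) ∣ (cyclotomic k ℤ).eval (q : ℤ) ↔ (r : ℤ) ∣ (cyclotomic k ℤ).eval (t - 1)) := by
  have : Fact r.Prime := ⟨hr⟩
  have hk0 : NeZero (k : ZMod r) := ⟨fun h0 => hndvd
    (Dvd.dvd.mul_right (Int.natCast_dvd_natCast.2 ((ZMod.natCast_eq_zero_iff k r).1 h0)) _)⟩
  have key : ∀ a : ℤ, (r : ℤ) ∣ (cyclotomic k ℤ).eval a ↔ IsPrimitiveRoot (a : ZMod r) k := by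
    intro a
    rw [← isRoot_cyclotomic_iff, IsRoot.def, ← map_cyclotomic_int k (ZMod r),
      eval_intCast_map, ← ZMod.intCast_zmod_eq_zero_iff_dvd]
    simp
  -- `h * r` vanishes in `ZMod r`, so `q` and `t - 1` have the same residue.
  have hqt : ((q : ℤ) : ZMod r) = ((t - 1 : ℤ) : ZMod r) := by
    have hc := congrArg (Int.cast : ℤ → ZMod r) hcard
    push_cast at hc ⊢
    rw [ZMod.natCast_self, mul_zero] at hc
    linear_combination hc
  refine ⟨?_, by rw [key, key, hqt]⟩
  rw [key, Int.cast_natCast]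
  exact ⟨fun ho => ho ▸ IsPrimitiveRoot.orderOf _, fun hp => hp.eq_orderOf.symm⟩
end
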